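/- Let u : [0,∞) → ℝ be càdlàg with E[h(0, Y_0)] ≤ u_0. Then there exists a unique solution (X, k) of the Skorokhod problem with mean minimality condition and upper barrier u associated with (h, Y, u); moreover k_t = −sup_{s≤t} (ū_s − E[Y_s])⁻ for every t ≥ 0, where ū : [0,∞) → ℝ is the unique function with E[h(s, Y_s − E[Y_s] + ū_s)] = u_s for all s ≥ 0 and a⁻ = max(−a, 0). -/

import Mathlib

open MeasureTheory Filter Set Function Topology

noncomputable section

/-- A function with values in a topological space is càdlàg on `[0,∞)`:
right-continuous at every `t ≥ 0` and admitting a left limit at every `t > 0`. -/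
def CadlagOn {E : Type*} [TopologicalSpace E] (f : ℝ → E) : Prop :=
  (∀ t : ℝ, 0 ≤ t → ContinuousWithinAt f (Set.Ici t) t) ∧
  ∀ t : ℝ, 0 < t → ∃ L : E, Filter.Tendsto f (nhdsWithin t (Set.Iio t)) (nhds L)

/-- Condition (H) on `h : [0,∞) × ℝ → ℝ` with constants `Mh, Lh, ch, Ch`. -/
structure CondH (h : ℝ → ℝ → ℝ) (Mh Lh ch Ch : ℝ) : Prop where
  meas : Measurable (Function.uncurry h)
  Mh_pos : 0 < Mh
  Lh_pos : 0 < Lh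
  ch_pos : 0 < ch
  Ch_pos : 0 < Ch
  growth : ∀ t x : ℝ, 0 ≤ t → |h t x| ≤ Mh * (1 + |x|)
  strict_mono : ∀ t : ℝ, 0 ≤ t → StrictMono (h t)
  lip_time : ∀ s t x : ℝ, 0 ≤ s → 0 ≤ t → |h t x - h s x| ≤ Lh * |t - s|
  lip_lower : ∀ t x y : ℝ, 0 ≤ t → ch * |x - y| ≤ |h t x - h t y|
  lip_upper : ∀ t x y : ℝ, 0 ≤ t → |h t x - h t y| ≤ Ch * |x - y|

/-- A process with càdlàg paths, integrable values, and values uniformly integrable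
on every compact time interval. -/
structure NiceProcess {Ω : Type*} [MeasurableSpace Ω] (μ : Measure Ω) (Y : ℝ → Ω → ℝ) : Prop where
  cadlag : ∀ ω, CadlagOn fun t => Y t ω
  integrable : ∀ t : ℝ, 0 ≤ t → Integrable (Y t) μ
  unifInt : ∀ q : ℝ, 0 ≤ q → UniformIntegrable (fun t : Set.Icc (0:ℝ) q => Y t.1) 1 μ

/-- Solution of the Skorokhod problem with mean minimality condition and two constraints
associated with `(h, Y, l, u)`. -/
def MeanSP {Ω : Type*} [MeasurableSpace Ω] (μ : Measure Ω) (h : ℝ → ℝ → ℝ)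
    (Y : ℝ → Ω → ℝ) (l u : ℝ → ℝ) (X : ℝ → Ω → ℝ) (k : ℝ → ℝ) : Prop :=
  (∀ ω, CadlagOn fun t => X t ω) ∧ CadlagOn k ∧ k 0 = 0 ∧
  (∀ t : ℝ, 0 ≤ t → ∀ ω, X t ω = Y t ω + k t) ∧
  (∀ t : ℝ, 0 ≤ t → (∫ ω, h t (X t ω) ∂μ) ∈ Set.Icc (l t) (u t)) ∧
  (∀ t q : ℝ, 0 ≤ t → t ≤ q →
    ((∀ s : ℝ, t < s → s ≤ q → (∫ ω, h s (X s ω) ∂μ) < u s) → 0 ≤ k q - k t) ∧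
    ((∀ s : ℝ, t < s → s ≤ q → l s < ∫ ω, h s (X s ω) ∂μ) → k q - k t ≤ 0)) ∧
  ∀ t : ℝ, 0 < t →
    ((∫ ω, h t (X t ω) ∂μ) < u t → 0 ≤ k t - Function.leftLim k t) ∧
    (l t < ∫ ω, h t (X t ω) ∂μ → k t - Function.leftLim k t ≤ 0)

/-- Solution of the deterministic Skorokhod problem with two time-dependent barriers. -/
def DetSP (y lb ub x k : ℝ → ℝ) : Prop :=
  CadlagOn x ∧ CadlagOn k ∧ k 0 = 0 ∧
  (∀ t : ℝ, 0 ≤ t → x t = y t + k t ∧ x t ∈ Set.Icc (lb t) (ub t)) ∧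
  (∀ t q : ℝ, 0 ≤ t → t ≤ q →
    ((∀ s : ℝ, t < s → s ≤ q → x s < ub s) → 0 ≤ k q - k t) ∧
    ((∀ s : ℝ, t < s → s ≤ q → lb s < x s) → k q - k t ≤ 0)) ∧
  ∀ t : ℝ, 0 < t →
    (x t < ub t → 0 ≤ k t - Function.leftLim k t) ∧
    (lb t < x t → k t - Function.leftLim k t ≤ 0)

/-- Solution of the Skorokhod problem with mean minimality condition and a single
lower barrier `l`.  The minimality condition `∫ (E[h(s,X_s)] - l_s) dk_s = 0` is expressed
through any measure `ν` that agrees with the Lebesgue–Stieltjes measure of `k` on `[0,∞)`. -/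
def MeanSPLower {Ω : Type*} [MeasurableSpace Ω] (μ : Measure Ω) (h : ℝ → ℝ → ℝ)
    (Y : ℝ → Ω → ℝ) (l : ℝ → ℝ) (X : ℝ → Ω → ℝ) (k : ℝ → ℝ) : Prop :=
  (∀ ω, CadlagOn fun t => X t ω) ∧ CadlagOn k ∧ k 0 = 0 ∧
  (∀ t : ℝ, 0 ≤ t → ∀ ω, X t ω = Y t ω + k t) ∧
  (∀ t : ℝ, 0 ≤ t → l t ≤ ∫ ω, h t (X t ω) ∂μ) ∧
  MonotoneOn k (Set.Ici 0) ∧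
  ∀ ν : Measure ℝ,
    (∀ a b : ℝ, 0 ≤ a → a ≤ b → ν (Set.Ioc a b) = ENNReal.ofReal (k b - k a)) →
    ν {0} = 0 →
    ∀ t : ℝ, 0 ≤ t → (∫ s in Set.Icc 0 t, ((∫ ω, h s (X s ω) ∂μ) - l s) ∂ν) = 0

/-- Solution of the Skorokhod problem with mean minimality condition and a single
upper barrier `u`.  The minimality condition `∫ (u_s - E[h(s,X_s)]) d(-k)_s = 0` is expressed
through any measure `ν` that agrees with the Lebesgue–Stieltjes measure of `-k` on `[0,∞)`. -/
def MeanSPUpper {Ω : Type*} [MeasurableSpace Ω] (μ : Measure Ω) (h : ℝ → ℝ → ℝ)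
    (Y : ℝ → Ω → ℝ) (u : ℝ → ℝ) (X : ℝ → Ω → ℝ) (k : ℝ → ℝ) : Prop :=
  (∀ ω, CadlagOn fun t => X t ω) ∧ CadlagOn k ∧ k 0 = 0 ∧
  (∀ t : ℝ, 0 ≤ t → ∀ ω, X t ω = Y t ω + k t) ∧
  (∀ t : ℝ, 0 ≤ t → (∫ ω, h t (X t ω) ∂μ) ≤ u t) ∧
  AntitoneOn k (Set.Ici 0) ∧
  ∀ ν : Measure ℝ,
    (∀ a b : ℝ, 0 ≤ a → a ≤ b → ν (Set.Ioc a b) = ENNReal.ofReal (k a - k b)) →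
    ν {0} = 0 →
    ∀ t : ℝ, 0 ≤ t → (∫ s in Set.Icc 0 t, (u s - ∫ ω, h s (X s ω) ∂μ) ∂ν) = 0

/-- `OscN x η q` is the number of `η`-oscillations of `x` on `[0,q]`: the largest `m`
for which there are `0 ≤ t₁ ≤ t₂ ≤ ⋯ ≤ t_{2m} ≤ q` with `|x(t_{2i}) - x(t_{2i-1})| > η`. -/
def OscN (x : ℝ → ℝ) (η q : ℝ) : ℕ :=
  sSup {m : ℕ | ∃ a b : Fin m → ℝ,
    (∀ i, 0 ≤ a i ∧ a i ≤ b i ∧ b i ≤ q) ∧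
    (∀ i j, i < j → b i ≤ a j) ∧
    ∀ i, η < |x (b i) - x (a i)|}

/-- The left limit at `t` of a càdlàg function on `[0,∞)`, with the convention
`x(0-) = x(0)`. -/
def leftLimAt {E : Type*} [TopologicalSpace E] (x : ℝ → E) (t : ℝ) : E :=
  if t = 0 then x 0 else Function.leftLim x t

/-- Convergence `xₙ → x` in the Skorokhod `J₁` topology on `D([0,∞), E)`, expressed via
the sequence characterization used in the paper. -/
def DConvOn {E : Type*} [TopologicalSpace E] (xs : ℕ → ℝ → E) (x : ℝ → E) : Prop :=
  ∀ t : ℝ, 0 ≤ t → ∃ tn : ℕ → ℝ,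
    (∀ n, 0 ≤ tn n) ∧ Filter.Tendsto tn Filter.atTop (nhds t) ∧
    ∀ t' t'' : ℕ → ℝ, (∀ n, 0 ≤ t' n) → (∀ n, 0 ≤ t'' n) →
      Filter.Tendsto t' Filter.atTop (nhds t) → Filter.Tendsto t'' Filter.atTop (nhds t) →
      (∀ n, t' n < tn n ∧ tn n ≤ t'' n) →
      Filter.Tendsto (fun n => xs n (t' n)) Filter.atTop (nhds (leftLimAt x t)) ∧
      Filter.Tendsto (fun n => xs n (t'' n)) Filter.atTop (nhds (x t))

/-!
Since `h` is strictly increasing with slope between `ch` and `Ch`, so is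
`z ↦ E[h(t, Y_t + z)]`. With `v_t = ū_t - E[Y_t]`, the shift at which this mean equals `u_t`, the
constraint on `X = Y + k` says `k ≤ v`, and the minimality condition says that `d(-k)` is carried by
`{k = v}`. This is the deterministic Skorokhod problem under the barrier `v`, whose only solution
is `k_t = -sup_{s ≤ t} v_s⁻`.

By Vitali's theorem `t ↦ Y_t` is càdlàg in `L¹`. Both the mean of a shifted path and the barrier `v`
depend Lipschitz continuously on `(t, Y_t)` and a real càdlàg function, so they are càdlàg.

For the running supremum, a time off the contact set has a right neighbourhood of zero `d(-k)`-mass.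
The interiors of these neighbourhoods form an open null set, which misses only countably many such
times, each of them null; so `d(-k)` is carried by the contact set. Uniqueness holds because `-k`
must put mass on `{-k > c}` to rise above the level `c`.
-/

section RightNeighborhoods

variable {α : Type*} [LinearOrder α] [TopologicalSpace α] [OrderTopology α]
  [SecondCountableTopology α]

theorem countable_sdiff_of_forall_Ioo_subset {s U : Set α}
    (h : ∀ x ∈ s, ∃ y > x, Ioo x y ⊆ U) : (s \ U).Countable := by
  refine (countable_setOfPred_isolated_right_within (s := s \ U)).mono
    fun x hx => mem_ofPred.2 ⟨hx, ?_⟩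
  obtain ⟨y, hxy, hy⟩ := h x hx.1
  rw [← empty_mem_iff_bot, mem_nhdsWithin_iff_exists_mem_nhds_inter]
  exact ⟨Iio y, Iio_mem_nhds hxy, fun z hz => hz.2.1.2 (hy ⟨hz.2.2, hz.1⟩)⟩

theorem measure_null_of_forall_Ico_null [MeasurableSpace α] {ν : Measure α} {s : Set α}
    (h : ∀ x ∈ s, ∃ y > x, ν (Ico x y) = 0) : ν s = 0 := by
  choose! y hxy hy using h
  set U : Set α := ⋃ x ∈ s, Ioo x (y x)
  have hU : ν U = 0 := by
    refine measure_null_of_locally_null U fun z hz => ?_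
    obtain ⟨x, hx, hz⟩ := mem_iUnion₂.1 hz
    exact ⟨Ioo x (y x), mem_nhdsWithin_of_mem_nhds (isOpen_Ioo.mem_nhds hz),
      measure_mono_null Ioo_subset_Ico_self (hy x hx)⟩
  have hcount : (s \ U).Countable :=
    countable_sdiff_of_forall_Ioo_subset fun x hx =>
      ⟨y x, hxy x hx, subset_biUnion_of_mem (u := fun x => Ioo x (y x)) hx⟩
  have hdiff : ν (s \ U) = 0 := by
    rw [← biUnion_of_singleton (s \ U), measure_biUnion_null_iff hcount]
    intro x hx
    exact measure_mono_null (singleton_subset_iff.2 (left_mem_Ico.2 (hxy x hx.1))) (hy x hx.1)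
  exact measure_mono_null (sdiff_subset_iff.1 Subset.rfl) (measure_union_null hU hdiff)

theorem measurable_of_forall_continuousWithinAt_Ici [NoMaxOrder α] [MeasurableSpace α]
    [BorelSpace α] {E : Type*} [TopologicalSpace E] [MeasurableSpace E] [BorelSpace E]
    {f : α → E} (hf : ∀ x, ContinuousWithinAt f (Ici x) x) : Measurable f := by
  refine measurable_of_isOpen fun V hV => ?_
  have hcount : (f ⁻¹' V \ interior (f ⁻¹' V)).Countable := by
    refine countable_sdiff_of_forall_Ioo_subset fun x hx => ?_
    obtain ⟨y, hxy, hy⟩ := mem_nhdsGE_iff_exists_Ico_subset.1 (hf x (hV.mem_nhds hx))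
    exact ⟨y, hxy, interior_maximal (Ioo_subset_Ico_self.trans hy) isOpen_Ioo⟩
  rw [← union_sdiff_cancel (interior_subset (s := f ⁻¹' V))]
  exact isOpen_interior.measurableSet.union hcount.measurableSet

end RightNeighborhoods

section Cadlag

theorem cadlagOn_of_continuous {E : Type*} [TopologicalSpace E] {f : ℝ → E} (hf : Continuous f) :
    CadlagOn f :=
  ⟨fun _ _ => hf.continuousWithinAt, fun t _ => ⟨f t, hf.continuousAt.continuousWithinAt⟩⟩

theorem cadlagOn_of_monotoneOn {E : Type*} [ConditionallyCompleteLinearOrder E]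
    [TopologicalSpace E] [OrderTopology E] {f : ℝ → E} (hf : MonotoneOn f (Ici 0))
    (hright : ∀ t, 0 ≤ t → ContinuousWithinAt f (Ici t) t) : CadlagOn f := by
  refine ⟨hright, fun t ht => ⟨_, MonotoneOn.tendsto_nhdsWithin_Ioo_left (nonempty_Ioo.2 ht)
    (hf.mono fun s hs => hs.1.le) ⟨f t, ?_⟩⟩⟩
  rintro _ ⟨s, hs, rfl⟩
  exact hf hs.1.le ht.le hs.2.le

namespace CadlagOn

section Topological

variable {E F : Type*} [TopologicalSpace E] [TopologicalSpace F] {f g : ℝ → E}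

theorem congr (hf : CadlagOn f) (h : ∀ t, 0 ≤ t → g t = f t) : CadlagOn g := by
  refine ⟨fun t ht => (hf.1 t ht).congr (fun s hs => h s (ht.trans hs)) (h t ht), fun t ht => ?_⟩
  obtain ⟨L, hL⟩ := hf.2 t ht
  refine ⟨L, hL.congr' ?_⟩
  filter_upwards [Ioo_mem_nhdsLT ht] with s hs
  exact (h s hs.1.le).symm

theorem prodMk {g : ℝ → F} (hf : CadlagOn f) (hg : CadlagOn g) :
    CadlagOn fun t => (f t, g t) := by
  refine ⟨fun t ht => (hf.1 t ht).prodMk (hg.1 t ht), fun t ht => ?_⟩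
  obtain ⟨L, hL⟩ := hf.2 t ht
  obtain ⟨M, hM⟩ := hg.2 t ht
  exact ⟨(L, M), hL.prodMk_nhds hM⟩

theorem continuous_comp (hf : CadlagOn f) {φ : E → F} (hφ : Continuous φ) :
    CadlagOn fun t => φ (f t) := by
  refine ⟨fun t ht => hφ.continuousAt.comp_continuousWithinAt (hf.1 t ht), fun t ht => ?_⟩
  obtain ⟨L, hL⟩ := hf.2 t ht
  exact ⟨φ L, (hφ.tendsto L).comp hL⟩

theorem neg [Neg E] [ContinuousNeg E] (hf : CadlagOn f) : CadlagOn fun t => -f t :=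
  hf.continuous_comp continuous_neg

theorem add [Add E] [ContinuousAdd E] (hf : CadlagOn f) (hg : CadlagOn g) :
    CadlagOn fun t => f t + g t :=
  (hf.prodMk hg).continuous_comp continuous_add

theorem sub [Sub E] [ContinuousSub E] (hf : CadlagOn f) (hg : CadlagOn g) :
    CadlagOn fun t => f t - g t :=
  (hf.prodMk hg).continuous_comp continuous_sub

theorem continuousWithinAt_comp_max (hf : CadlagOn f) (t : ℝ) :
    ContinuousWithinAt (fun s => f (max s 0)) (Ici t) t :=
  ContinuousWithinAt.comp (f := fun s => max s 0) (hf.1 _ (le_max_right t 0)) (by fun_prop)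
    fun _ hs => mem_Ici.2 (max_le_max_right 0 hs)

theorem measurable_comp_max [MeasurableSpace E] [BorelSpace E] (hf : CadlagOn f) :
    Measurable fun s => f (max s 0) :=
  measurable_of_forall_continuousWithinAt_Ici hf.continuousWithinAt_comp_max

end Topological

section Metric

variable {E F : Type*} [PseudoMetricSpace E] [PseudoMetricSpace F]

-- The left limits of `g` come from the Cauchy criterion, which passes from `f` to `g`.
theorem of_dist_le_mul [CompleteSpace F] {f : ℝ → E} {g : ℝ → F} (hf : CadlagOn f) (C : ℝ)
    (h : ∀ r s, 0 ≤ r → 0 ≤ s → dist (g r) (g s) ≤ C * dist (f r) (f s)) : CadlagOn g := by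
  refine ⟨fun t ht => ?_, fun t ht => ?_⟩
  · refine tendsto_iff_dist_tendsto_zero.2 (squeeze_zero' (.of_forall fun _ => dist_nonneg) ?_
      (by simpa using (tendsto_iff_dist_tendsto_zero.1 (hf.1 t ht)).const_mul C))
    filter_upwards [self_mem_nhdsWithin] with s hs
    exact h s t (ht.trans hs) ht
  · obtain ⟨L, hL⟩ := hf.2 t ht
    have hcauchy := tendsto_uniformity_iff_dist_tendsto_zero.1 (cauchy_map_iff'.1 hL.cauchy_map)
    refine cauchy_map_iff_exists_tendsto.1 (cauchy_map_iff'.2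
      (tendsto_uniformity_iff_dist_tendsto_zero.2 (squeeze_zero' (.of_forall fun _ => dist_nonneg)
        ?_ (by simpa using hcauchy.const_mul C))))
    have hpos : ∀ᶠ s in 𝓝[<] t, 0 ≤ s := (eventually_ge_nhds ht).filter_mono nhdsWithin_le_nhds
    filter_upwards [hpos.prod_mk hpos] with p hp
    exact h p.1 p.2 hp.1 hp.2

theorem isBounded_image_Icc {f : ℝ → E} (hf : CadlagOn f) (T : ℝ) :
    Bornology.IsBounded (f '' Icc 0 T) := by
  refine isCompact_Icc.induction_on (p := fun S => Bornology.IsBounded (f '' S)) (by simp)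
    (fun S S' hSS' hS' => hS'.subset (image_mono hSS'))
    (fun S S' hS hS' => by simpa only [image_union] using hS.union hS') fun t ht => ?_
  obtain ⟨R, hR, hRb⟩ := Metric.exists_isBounded_image_of_tendsto (hf.1 t ht.1).tendsto
  rcases ht.1.eq_or_lt with rfl | hpos
  · exact ⟨R, nhdsWithin_mono 0 Icc_subset_Ici_self hR, hRb⟩
  · obtain ⟨L, hL⟩ := hf.2 t hpos
    obtain ⟨S, hS, hSb⟩ := Metric.exists_isBounded_image_of_tendsto hL
    refine ⟨S ∪ R, mem_nhdsWithin_of_mem_nhds ?_, by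
      simpa only [image_union] using hSb.union hRb⟩
    rw [← nhdsLT_sup_nhdsGE t]
    exact union_mem_sup hS hR

end Metric

theorem integrableOn_Icc {E : Type*} [NormedAddCommGroup E] [SecondCountableTopology E]
    {f : ℝ → E} (hf : CadlagOn f) {ν : Measure ℝ} {T : ℝ} (hν : ν (Icc 0 T) ≠ ⊤) :
    IntegrableOn f (Icc 0 T) ν := by
  borelize E
  obtain ⟨C, hC⟩ := (hf.isBounded_image_Icc T).exists_norm_le
  refine IntegrableOn.congr_fun (f := fun s => f (max s 0)) ?_
    (fun s hs => congrArg f (max_eq_left hs.1)) measurableSet_Icc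
  refine Measure.integrableOn_of_bounded (M := C) hν
    hf.measurable_comp_max.aestronglyMeasurable ?_
  filter_upwards [ae_restrict_mem measurableSet_Icc] with s hs
  rw [max_eq_left hs.1]
  exact hC _ (mem_image_of_mem f hs)

theorem forall_setIntegral_Icc_eq_zero_iff {g : ℝ → ℝ} (hg : CadlagOn g)
    (hg_nonneg : ∀ s, 0 ≤ s → 0 ≤ g s) {ν : Measure ℝ} (hν : ∀ T, ν (Icc 0 T) ≠ ⊤) :
    (∀ T, 0 ≤ T → ∫ s in Icc 0 T, g s ∂ν = 0) ↔ ∀ᵐ s ∂ν, 0 ≤ s → g s = 0 := by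
  have hiff (T : ℝ) : ∫ s in Icc 0 T, g s ∂ν = 0 ↔ ∀ᵐ s ∂ν, s ∈ Icc 0 T → g s = 0 := by
    rw [integral_eq_zero_iff_of_nonneg_ae _ (hg.integrableOn_Icc (hν T))]
    · exact ae_restrict_iff' measurableSet_Icc
    · filter_upwards [ae_restrict_mem measurableSet_Icc] with s hs using hg_nonneg s hs.1
  refine ⟨fun h => ?_, fun h T _ => (hiff T).2 (h.mono fun s hs hsT => hs hsT.1)⟩
  filter_upwards [ae_all_iff.2 fun n : ℕ => (hiff n).1 (h n n.cast_nonneg)] with s hs hs0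
  exact hs ⌈s⌉₊ ⟨hs0, Nat.le_ceil s⟩

end CadlagOn

end Cadlag

section Stieltjes

theorem ofReal_sub_le_measure_superlevelSet (f : StieltjesFunction ℝ) {a t c : ℝ} (ha : f a ≤ c) :
    ENNReal.ofReal (f t - c) ≤ f.measure {s ∈ Ioc a t | c < f s} := by
  rcases le_or_gt (f t) c with htc | htc
  · simp [ENNReal.ofReal_of_nonpos (sub_nonpos.2 htc)]
  have hlower : a ∈ lowerBounds {s | c < f s} := fun s hs => (f.mono.reflect_lt (ha.trans_lt hs)).le
  set τ := sInf {s | c < f s}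
  have hlt_of_gt {s : ℝ} (hs : τ < s) : c < f s := by
    obtain ⟨r, hr, hrs⟩ := exists_lt_of_csInf_lt ⟨t, htc⟩ hs
    exact hr.trans_le (f.mono hrs.le)
  have hle_of_lt {s : ℝ} (hs : s < τ) : f s ≤ c := le_of_not_gt fun hc =>
    hs.not_ge (csInf_le ⟨a, hlower⟩ hc)
  have haτ : a ≤ τ := le_csInf ⟨t, htc⟩ hlower
  rcases lt_or_ge c (f τ) with hτ | hτ
  · have hleft : leftLim f τ ≤ c := le_of_tendsto (f.mono.tendsto_leftLim τ)
      (eventually_mem_nhdsWithin.mono fun s hs => hle_of_lt hs)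
    have hsub : Icc τ t ⊆ {s ∈ Ioc a t | c < f s} := fun s hs =>
      ⟨⟨(f.mono.reflect_lt (ha.trans_lt hτ)).trans_le hs.1, hs.2⟩, hτ.trans_le (f.mono hs.1)⟩
    calc ENNReal.ofReal (f t - c) ≤ ENNReal.ofReal (f t - leftLim f τ) := by gcongr
      _ = f.measure (Icc τ t) := (f.measure_Icc τ t).symm
      _ ≤ _ := measure_mono hsub
  · have hsub : Ioc τ t ⊆ {s ∈ Ioc a t | c < f s} := fun s hs =>
      ⟨⟨haτ.trans_lt hs.1, hs.2⟩, hlt_of_gt hs.1⟩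
    calc ENNReal.ofReal (f t - c) ≤ ENNReal.ofReal (f t - f τ) := by gcongr
      _ = f.measure (Ioc τ t) := (f.measure_Ioc τ t).symm
      _ ≤ _ := measure_mono hsub

/-- `ν` agrees on `[0,∞)` with the Lebesgue–Stieltjes measure `d(-k)` of a nonincreasing
right-continuous `k`; there is no mass at `0`, i.e. `k(0-) = k(0)`. -/
structure IsNegStieltjes (k : ℝ → ℝ) (ν : Measure ℝ) : Prop where
  measure_Ioc : ∀ a b : ℝ, 0 ≤ a → a ≤ b → ν (Ioc a b) = ENNReal.ofReal (k a - k b)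
  measure_zero : ν {0} = 0

variable {k : ℝ → ℝ} {ν : Measure ℝ}

theorem IsNegStieltjes.measure_Icc_zero_ne_top (hν : IsNegStieltjes k ν) (t : ℝ) :
    ν (Icc 0 t) ≠ ⊤ := by
  rcases lt_or_ge t 0 with ht | ht
  · simp [Icc_eq_empty_of_lt ht]
  · rw [← Ioc_union_left ht]
    exact measure_union_ne_top (by simp [hν.measure_Ioc 0 t le_rfl ht]) (by simp [hν.measure_zero])

theorem IsNegStieltjes.measure_Icc_le (hν : IsNegStieltjes k ν) {x r l : ℝ} (hx : 0 < x)
    (hxr : x ≤ r) (hl : Tendsto k (𝓝[<] x) (𝓝 l)) : ν (Icc x r) ≤ ENNReal.ofReal (l - k r) := by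
  refine ge_of_tendsto ((ENNReal.continuous_ofReal.tendsto _).comp (hl.sub_const (k r))) ?_
  filter_upwards [Ioo_mem_nhdsLT hx] with a ha
  calc ν (Icc x r) ≤ ν (Ioc a r) := measure_mono fun s hs => ⟨ha.2.trans_le hs.1, hs.2⟩
    _ = ENNReal.ofReal (k a - k r) := hν.measure_Ioc a r ha.1.le (ha.2.le.trans hxr)

/-- The Stieltjes function `-k` of a nonincreasing càdlàg `k` on `[0,∞)`, frozen at `-k 0` on the
negative half-line. -/
def negStieltjes (hk : CadlagOn k) (hanti : AntitoneOn k (Ici 0)) : StieltjesFunction ℝ where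
  toFun x := -k (max x 0)
  mono' _ _ hxy := neg_le_neg <|
    hanti (mem_Ici.2 (le_max_right _ 0)) (mem_Ici.2 (le_max_right _ 0)) (max_le_max_right 0 hxy)
  right_continuous' x := (hk.continuousWithinAt_comp_max x).neg

theorem negStieltjes_apply (hk : CadlagOn k) (hanti : AntitoneOn k (Ici 0)) {t : ℝ} (ht : 0 ≤ t) :
    negStieltjes hk hanti t = -k t := by
  simp [negStieltjes, ht]

theorem isNegStieltjes_measure_negStieltjes (hk : CadlagOn k) (hanti : AntitoneOn k (Ici 0)) :
    IsNegStieltjes k (negStieltjes hk hanti).measure where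
  measure_Ioc a b ha hab := by
    rw [StieltjesFunction.measure_Ioc, negStieltjes_apply hk hanti ha,
      negStieltjes_apply hk hanti (ha.trans hab), neg_sub_neg]
  measure_zero := by
    have hleft : leftLim (negStieltjes hk hanti) 0 = -k 0 := by
      refine leftLim_eq_of_tendsto (tendsto_const_nhds.congr' ?_)
      filter_upwards [self_mem_nhdsWithin] with s hs
      exact congrArg (fun s => -k s) (max_eq_right (mem_Iio.1 hs).le).symm
    rw [StieltjesFunction.measure_singleton, hleft, negStieltjes_apply hk hanti le_rfl, sub_self,
      ENNReal.ofReal_zero]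

end Stieltjes

section RunningSup

/-- The running supremum over `[0, t]` of the positive part of `g`; it is `0` for `t < 0`. -/
def posRunningSup (g : ℝ → ℝ) (t : ℝ) : ℝ := sSup ((fun s => max (g s) 0) '' Icc 0 t)

variable {g : ℝ → ℝ} {b t : ℝ}

theorem posRunningSup_nonneg (g : ℝ → ℝ) (t : ℝ) : 0 ≤ posRunningSup g t :=
  Real.sSup_nonneg (forall_mem_image.2 fun s _ => le_max_right (g s) 0)

theorem posRunningSup_le (hb : 0 ≤ b) (hg : ∀ s ∈ Icc 0 t, g s ≤ b) : posRunningSup g t ≤ b :=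
  Real.sSup_le (forall_mem_image.2 fun s hs => max_le (hg s hs) hb) hb

theorem le_posRunningSup {s : ℝ} (hg : BddAbove (g '' Icc 0 t)) (hs : s ∈ Icc 0 t) :
    g s ≤ posRunningSup g t := by
  obtain ⟨C, hC⟩ := hg
  have hbdd : BddAbove ((fun s => max (g s) 0) '' Icc 0 t) :=
    ⟨max C 0, forall_mem_image.2 fun r hr => max_le_max_right 0 (hC (mem_image_of_mem g hr))⟩
  exact (le_max_left _ _).trans (le_csSup hbdd (mem_image_of_mem _ hs))

theorem posRunningSup_zero (hg : g 0 ≤ 0) : posRunningSup g 0 = 0 :=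
  (posRunningSup_le le_rfl (by simpa using hg)).antisymm (posRunningSup_nonneg g 0)

theorem posRunningSup_mono (hg : ∀ t, BddAbove (g '' Icc 0 t)) : Monotone (posRunningSup g) :=
  fun _ t hst => posRunningSup_le (posRunningSup_nonneg g t) fun _ hr =>
    le_posRunningSup (hg t) ⟨hr.1, hr.2.trans hst⟩

theorem exists_gt_posRunningSup_le (hg : ∀ t, BddAbove (g '' Icc 0 t))
    (hcont : ContinuousWithinAt g (Ici t) t) (hb : posRunningSup g t ≤ b) (hgt : g t < b) :
    ∃ r > t, posRunningSup g r ≤ b := by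
  obtain ⟨r, htr, hr⟩ := mem_nhdsGE_iff_exists_Icc_subset.1 (hcont (Iio_mem_nhds hgt))
  refine ⟨r, htr, posRunningSup_le ((posRunningSup_nonneg g t).trans hb) fun s hs => ?_⟩
  rcases le_total s t with hst | hts
  · exact (le_posRunningSup (hg t) ⟨hs.1, hst⟩).trans hb
  · exact (mem_Iio.1 (hr ⟨hts, hs.2⟩)).le

theorem posRunningSup_le_max_leftLim (hg : ∀ t, BddAbove (g '' Icc 0 t)) (t : ℝ) :
    posRunningSup g t ≤ max (leftLim (posRunningSup g) t) (g t) := by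
  have hle_leftLim {s : ℝ} (hs : s < t) : posRunningSup g s ≤ leftLim (posRunningSup g) t :=
    (posRunningSup_mono hg).le_leftLim hs
  have hnonneg : 0 ≤ leftLim (posRunningSup g) t :=
    (posRunningSup_nonneg g (t - 1)).trans (hle_leftLim (sub_one_lt t))
  refine posRunningSup_le (le_max_of_le_left hnonneg) fun s hs => ?_
  rcases hs.2.eq_or_lt with rfl | hst
  · exact le_max_right _ _
  · exact le_max_of_le_left ((le_posRunningSup (hg s) ⟨hs.1, le_rfl⟩).trans (hle_leftLim hst))

theorem leftLim_posRunningSup_eq (hg : ∀ t, BddAbove (g '' Icc 0 t))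
    (hgt : g t < posRunningSup g t) :
    leftLim (posRunningSup g) t = posRunningSup g t :=
  ((posRunningSup_mono hg).leftLim_le le_rfl).antisymm <|
    (le_max_iff.1 (posRunningSup_le_max_leftLim hg t)).resolve_right hgt.not_ge

theorem cadlagOn_posRunningSup (hg : ∀ t, BddAbove (g '' Icc 0 t))
    (hcont : ∀ t, 0 ≤ t → ContinuousWithinAt g (Ici t) t) : CadlagOn (posRunningSup g) := by
  have hmono := posRunningSup_mono hg
  refine cadlagOn_of_monotoneOn (hmono.monotoneOn _) fun t ht => ?_
  refine tendsto_order.2 ⟨fun b hb => ?_, fun b hb => ?_⟩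
  · filter_upwards [self_mem_nhdsWithin] with s hs
    exact hb.trans_le (hmono hs)
  · obtain ⟨c, hc, hcb⟩ := exists_between hb
    obtain ⟨r, htr, hr⟩ := exists_gt_posRunningSup_le hg (hcont t ht) hc.le
      ((le_posRunningSup (hg t) ⟨ht, le_rfl⟩).trans_lt hc)
    filter_upwards [Ico_mem_nhdsGE htr] with s hs
    exact ((hmono hs.2.le).trans hr).trans_lt hcb

end RunningSup

section Reflection

/-- `k` solves the deterministic one-sided Skorokhod problem under the barrier `v`: it is
nonincreasing from `0`, stays below `v`, and decreases only on the contact set, i.e. `d(-k)` is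
carried by `{k = v}`. -/
structure IsUpperReflection (v k : ℝ → ℝ) : Prop where
  cadlag : CadlagOn k
  apply_zero : k 0 = 0
  antitoneOn : AntitoneOn k (Ici 0)
  le_barrier : ∀ t, 0 ≤ t → k t ≤ v t
  flat : ∀ ν, IsNegStieltjes k ν → ∀ᵐ s ∂ν, 0 ≤ s → k s = v s

variable {v k : ℝ → ℝ}

theorem CadlagOn.bddAbove_image_neg_Icc (hv : CadlagOn v) (t : ℝ) :
    BddAbove ((fun s => -v s) '' Icc 0 t) :=
  (hv.neg.isBounded_image_Icc t).bddAbove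

theorem IsNegStieltjes.exists_measure_Ico_eq_zero {g : ℝ → ℝ} {ν : Measure ℝ}
    (hν : IsNegStieltjes (fun t => -posRunningSup g t) ν) (hg : ∀ t, BddAbove (g '' Icc 0 t))
    {t : ℝ} (ht : 0 ≤ t) (hcont : ContinuousWithinAt g (Ici t) t) (hgt : g t < posRunningSup g t) :
    ∃ r > t, ν (Ico t r) = 0 := by
  obtain ⟨r, htr, hr⟩ := exists_gt_posRunningSup_le hg hcont le_rfl hgt
  have hincr : ENNReal.ofReal (-posRunningSup g t - -posRunningSup g r) = 0 :=
    ENNReal.ofReal_of_nonpos (by linarith)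
  refine ⟨r, htr, measure_mono_null Ico_subset_Icc_self ?_⟩
  rcases ht.eq_or_lt with rfl | hpos
  · rw [← Ioc_union_left htr.le]
    exact measure_union_null ((hν.measure_Ioc 0 r le_rfl htr.le).trans hincr) hν.measure_zero
  · have hleft := ((posRunningSup_mono hg).tendsto_leftLim t).neg
    rw [leftLim_posRunningSup_eq hg hgt] at hleft
    exact nonpos_iff_eq_zero.1 ((hν.measure_Icc_le hpos htr.le hleft).trans hincr.le)

theorem isUpperReflection_neg_posRunningSup (hv : CadlagOn v) (hv0 : 0 ≤ v 0) :
    IsUpperReflection v fun t => -posRunningSup (fun s => -v s) t where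
  cadlag := (cadlagOn_posRunningSup hv.bddAbove_image_neg_Icc hv.neg.1).neg
  apply_zero := neg_eq_zero.2 (posRunningSup_zero (neg_nonpos.2 hv0))
  antitoneOn := (posRunningSup_mono hv.bddAbove_image_neg_Icc).neg.antitoneOn _
  le_barrier t ht := neg_le.1 (le_posRunningSup (hv.bddAbove_image_neg_Icc t) ⟨ht, le_rfl⟩)
  flat ν hν := by
    refine measure_null_of_forall_Ico_null fun t ht => ?_
    obtain ⟨ht0, hne⟩ := Classical.not_imp.1 ht
    have hle := le_posRunningSup (hv.bddAbove_image_neg_Icc t) ⟨ht0, le_rfl⟩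
    exact hν.exists_measure_Ico_eq_zero hv.bddAbove_image_neg_Icc ht0 (hv.neg.1 t ht0)
      (hle.lt_of_ne fun heq => hne (by rw [← heq, neg_neg]))

namespace IsUpperReflection

theorem posRunningSup_le_neg (hk : IsUpperReflection v k) {t : ℝ} (ht : 0 ≤ t) :
    posRunningSup (fun s => -v s) t ≤ -k t := by
  have hk_le {s : ℝ} (hs : s ∈ Icc 0 t) : k t ≤ k s := hk.antitoneOn hs.1 ht hs.2
  refine posRunningSup_le ?_ fun s hs => neg_le_neg ((hk_le hs).trans (hk.le_barrier s hs.1))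
  simpa [hk.apply_zero] using hk_le ⟨le_rfl, ht⟩

-- Where `-k` exceeds the running supremum at `t`, `k` is off the barrier, so `d(-k)` has no mass;
-- but a nondecreasing function needs mass above a level to rise above it.
theorem neg_le_posRunningSup (hk : IsUpperReflection v k) {t : ℝ} (ht : 0 ≤ t) :
    -k t ≤ posRunningSup (fun s => -v s) t := by
  set f := negStieltjes hk.cadlag hk.antitoneOn
  set M := posRunningSup (fun s => -v s) t
  have hf {s : ℝ} (hs : 0 ≤ s) : f s = -k s := negStieltjes_apply hk.cadlag hk.antitoneOn hs
  have hbdd : BddAbove ((fun s => -v s) '' Icc 0 t) :=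
    ⟨-k t, forall_mem_image.2 fun s hs => neg_le_neg <|
      (hk.antitoneOn hs.1 ht hs.2).trans (hk.le_barrier s hs.1)⟩
  have hoff : {s ∈ Ioc 0 t | M < f s} ⊆ {s | ¬(0 ≤ s → k s = v s)} := by
    rintro s ⟨hs, hMs⟩ hflat
    rw [hf hs.1.le, hflat hs.1.le] at hMs
    exact hMs.not_ge (le_posRunningSup hbdd ⟨hs.1.le, hs.2⟩)
  have hnull : f.measure {s ∈ Ioc 0 t | M < f s} = 0 :=
    measure_mono_null hoff (hk.flat _ (isNegStieltjes_measure_negStieltjes _ _))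
  have hf0 : f 0 ≤ M := by simpa [hf le_rfl, hk.apply_zero] using posRunningSup_nonneg _ t
  have hle := (ofReal_sub_le_measure_superlevelSet f (t := t) hf0).trans_eq hnull
  simpa [hf ht] using hle

theorem eq_neg_posRunningSup (hk : IsUpperReflection v k) {t : ℝ} (ht : 0 ≤ t) :
    k t = -posRunningSup (fun s => -v s) t :=
  neg_eq_iff_eq_neg.1 ((hk.neg_le_posRunningSup ht).antisymm (hk.posRunningSup_le_neg ht))

end IsUpperReflection

end Reflection

section L1Path

variable {Ω : Type*} [MeasurableSpace Ω] {μ : Measure Ω}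

theorem tendsto_eLpNorm_sub_of_uniformIntegrable [IsFiniteMeasure μ] {ι E : Type*}
    [NormedAddCommGroup E] {l : Filter ι} [l.IsCountablyGenerated] {p : ENNReal} (hp : 1 ≤ p)
    (hp' : p ≠ ⊤) {f : ι → Ω → E} {g : Ω → E} (hf : UniformIntegrable f p μ) (hg : MemLp g p μ)
    (hlim : ∀ᵐ ω ∂μ, Tendsto (fun i => f i ω) l (𝓝 (g ω))) :
    Tendsto (fun i => eLpNorm (f i - g) p μ) l (𝓝 0) := by
  refine tendsto_of_seq_tendsto fun x hx => ?_
  refine tendsto_Lp_finite_of_tendsto_ae hp hp' (fun n => hf.1 (x n)) hg (fun ε hε => ?_)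
    (hlim.mono fun _ h => h.comp hx)
  obtain ⟨δ, hδ, hfδ⟩ := hf.unifIntegrable hε
  exact ⟨δ, hδ, fun n => hfδ (x n)⟩

namespace NiceProcess

variable {Y : ℝ → Ω → ℝ}

/-- The path `t ↦ Y t` in `L¹`, frozen at its value at `0` for negative times. -/
def toL1 (hY : NiceProcess μ Y) (t : ℝ) : Ω →₁[μ] ℝ :=
  (hY.integrable (max t 0) (le_max_right t 0)).toL1 _

theorem toL1_eq (hY : NiceProcess μ Y) {t : ℝ} (ht : 0 ≤ t) :
    hY.toL1 t = (hY.integrable t ht).toL1 _ := by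
  simp only [toL1, max_eq_left ht]

theorem dist_toL1 (hY : NiceProcess μ Y) {r s : ℝ} (hr : 0 ≤ r) (hs : 0 ≤ s) :
    dist (hY.toL1 r) (hY.toL1 s) = ∫ ω, |Y r ω - Y s ω| ∂μ := by
  rw [hY.toL1_eq hr, hY.toL1_eq hs, dist_eq_norm, ← Integrable.toL1_sub,
    L1.norm_of_fun_eq_integral_norm]
  rfl

theorem exists_tendsto_toL1 [IsFiniteMeasure μ] (hY : NiceProcess μ Y) {q : ℝ} (hq : 0 ≤ q)
    {l : Filter ℝ} [hne : l.NeBot] [l.IsCountablyGenerated] (hl : Icc 0 q ∈ l) {L : Ω → ℝ}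
    (hL : ∀ ω, Tendsto (fun t => Y t ω) l (𝓝 (L ω))) :
    ∃ hLint : Integrable L μ, Tendsto hY.toL1 l (𝓝 (hLint.toL1 L)) := by
  have hrange : range (Subtype.val : Icc (0 : ℝ) q → ℝ) ∈ l := by rwa [Subtype.range_coe]
  have : (comap (Subtype.val : Icc (0 : ℝ) q → ℝ) l).NeBot := hne.comap_of_range_mem hrange
  have hlim : ∀ᵐ ω ∂μ, Tendsto (fun t : Icc (0 : ℝ) q => Y t ω) (comap Subtype.val l) (𝓝 (L ω)) :=
    .of_forall fun ω => (hL ω).comp tendsto_comap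
  have hmem : MemLp L 1 μ := (hY.unifInt q hq).memLp_of_ae_tendsto hlim
  refine ⟨memLp_one_iff_integrable.1 hmem, (Lp.tendsto_Lp_iff_tendsto_eLpNorm _ _ hmem).2 ?_⟩
  refine (tendsto_comap'_iff hrange).1 ?_
  refine (tendsto_eLpNorm_sub_of_uniformIntegrable le_rfl ENNReal.one_ne_top (hY.unifInt q hq)
    hmem hlim).congr fun t => eLpNorm_congr_ae ?_
  rw [hY.toL1_eq t.2.1]
  exact ((hY.integrable t t.2.1).coeFn_toL1.sub .rfl).symm

theorem cadlagOn_toL1 [IsFiniteMeasure μ] (hY : NiceProcess μ Y) : CadlagOn hY.toL1 := by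
  refine ⟨fun t ht => ?_, fun t ht => ?_⟩
  · obtain ⟨_, hlim⟩ := hY.exists_tendsto_toL1 (q := t + 1) (by positivity)
      (mem_of_superset (Icc_mem_nhdsGE (lt_add_one t)) (Icc_subset_Icc_left ht))
      fun ω => (hY.cadlag ω).1 t ht
    rwa [ContinuousWithinAt, hY.toL1_eq ht]
  · choose L hL using fun ω => (hY.cadlag ω).2 t ht
    obtain ⟨_, hlim⟩ := hY.exists_tendsto_toL1 ht.le
      (mem_of_superset (Ioo_mem_nhdsLT ht) Ioo_subset_Icc_self) hL
    exact ⟨_, hlim⟩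

end NiceProcess

end L1Path

section MeanFunction

variable {Ω : Type*} [MeasurableSpace Ω] {μ : Measure Ω} {h : ℝ → ℝ → ℝ} {Mh Lh ch Ch : ℝ}

namespace CondH

theorem integrable_comp [IsFiniteMeasure μ] (hH : CondH h Mh Lh ch Ch) {t : ℝ} (ht : 0 ≤ t)
    {Z : Ω → ℝ} (hZ : Integrable Z μ) : Integrable (fun ω => h t (Z ω)) μ :=
  (((integrable_const 1).add hZ.abs).const_mul Mh).mono'
    (hH.meas.of_uncurry_left.comp_aemeasurable hZ.aemeasurable).aestronglyMeasurable
    (.of_forall fun ω => hH.growth t (Z ω) ht)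

theorem abs_integral_sub_le [IsProbabilityMeasure μ] (hH : CondH h Mh Lh ch Ch) {s t : ℝ}
    (hs : 0 ≤ s) (ht : 0 ≤ t) {W Z : Ω → ℝ} (hW : Integrable W μ) (hZ : Integrable Z μ) :
    |(∫ ω, h s (W ω) ∂μ) - ∫ ω, h t (Z ω) ∂μ| ≤ Lh * |s - t| + Ch * ∫ ω, |W ω - Z ω| ∂μ := by
  have hpointwise (ω : Ω) : |h s (W ω) - h t (Z ω)| ≤ Lh * |s - t| + Ch * |W ω - Z ω| :=
    (abs_sub_le _ (h t (W ω)) _).trans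
      (add_le_add (hH.lip_time t s (W ω) ht hs) (hH.lip_upper t (W ω) (Z ω) ht))
  have hWZ : Integrable (fun ω => Ch * |W ω - Z ω|) μ := (hW.sub hZ).abs.const_mul Ch
  rw [← integral_sub (hH.integrable_comp hs hW) (hH.integrable_comp ht hZ)]
  calc |∫ ω, (h s (W ω) - h t (Z ω)) ∂μ| ≤ ∫ ω, |h s (W ω) - h t (Z ω)| ∂μ :=
        abs_integral_le_integral_abs
    _ ≤ ∫ ω, (Lh * |s - t| + Ch * |W ω - Z ω|) ∂μ :=
        integral_mono ((hH.integrable_comp hs hW).sub (hH.integrable_comp ht hZ)).abs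
          ((integrable_const _).add hWZ) hpointwise
    _ = Lh * |s - t| + Ch * ∫ ω, |W ω - Z ω| ∂μ := by
        rw [integral_add (integrable_const _) hWZ, integral_const, probReal_univ, one_smul,
          integral_const_mul]

theorem mul_sub_le_sub (hH : CondH h Mh Lh ch Ch) {t x y : ℝ} (ht : 0 ≤ t) (hxy : x ≤ y) :
    ch * (y - x) ≤ h t y - h t x := by
  simpa only [abs_of_nonneg (sub_nonneg.2 hxy),
    abs_of_nonneg (sub_nonneg.2 ((hH.strict_mono t ht).monotone hxy))] using hH.lip_lower t y x ht

end CondH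

/-- The mean function `z ↦ E[h(t, Y_t + z)]`; the constraint on a solution reads
`shiftedMean μ h Y t (k t) ≤ u t`. -/
def shiftedMean (μ : Measure Ω) (h : ℝ → ℝ → ℝ) (Y : ℝ → Ω → ℝ) (t z : ℝ) : ℝ :=
  ∫ ω, h t (Y t ω + z) ∂μ

variable {Y : ℝ → Ω → ℝ} [IsProbabilityMeasure μ]

theorem mul_sub_le_shiftedMean_sub (hH : CondH h Mh Lh ch Ch) (hY : NiceProcess μ Y) {t : ℝ}
    (ht : 0 ≤ t) {y z : ℝ} (hyz : y ≤ z) :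
    ch * (z - y) ≤ shiftedMean μ h Y t z - shiftedMean μ h Y t y := by
  have hint (x : ℝ) : Integrable (fun ω => h t (Y t ω + x)) μ :=
    hH.integrable_comp ht ((hY.integrable t ht).add (integrable_const x))
  have hmono : ∫ _, ch * (z - y) ∂μ ≤ ∫ ω, (h t (Y t ω + z) - h t (Y t ω + y)) ∂μ := by
    refine integral_mono (integrable_const _) ((hint z).sub (hint y)) fun ω => ?_
    simpa only [add_sub_add_left_eq_sub] using hH.mul_sub_le_sub ht (add_le_add_right hyz (Y t ω))
  rwa [integral_const, probReal_univ, one_smul, integral_sub (hint z) (hint y)] at hmono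

theorem strictMono_shiftedMean (hH : CondH h Mh Lh ch Ch) (hY : NiceProcess μ Y) {t : ℝ}
    (ht : 0 ≤ t) : StrictMono (shiftedMean μ h Y t) := fun _ _ hyz =>
  sub_pos.1 <| (mul_pos hH.ch_pos (sub_pos.2 hyz)).trans_le
    (mul_sub_le_shiftedMean_sub hH hY ht hyz.le)

theorem mul_abs_sub_le_abs_shiftedMean_sub (hH : CondH h Mh Lh ch Ch) (hY : NiceProcess μ Y)
    {t : ℝ} (ht : 0 ≤ t) (y z : ℝ) :
    ch * |y - z| ≤ |shiftedMean μ h Y t y - shiftedMean μ h Y t z| := by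
  wlog hzy : z ≤ y generalizing y z
  · rw [abs_sub_comm y, abs_sub_comm (shiftedMean μ h Y t y)]
    exact this z y (le_of_not_ge hzy)
  rw [abs_of_nonneg (sub_nonneg.2 hzy)]
  exact (mul_sub_le_shiftedMean_sub hH hY ht hzy).trans (le_abs_self _)

theorem abs_shiftedMean_sub_le (hH : CondH h Mh Lh ch Ch) (hY : NiceProcess μ Y) {s t : ℝ}
    (hs : 0 ≤ s) (ht : 0 ≤ t) (y z : ℝ) :
    |shiftedMean μ h Y s y - shiftedMean μ h Y t z| ≤
      Lh * |s - t| + Ch * ((∫ ω, |Y s ω - Y t ω| ∂μ) + |y - z|) := by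
  have hsub : Integrable (fun ω => |Y s ω - Y t ω|) μ :=
    ((hY.integrable s hs).sub (hY.integrable t ht)).abs
  have hs' := (hY.integrable s hs).add (integrable_const y)
  have ht' := (hY.integrable t ht).add (integrable_const z)
  refine (hH.abs_integral_sub_le hs ht hs' ht').trans ?_
  have := hH.Ch_pos
  gcongr
  calc ∫ ω, |Y s ω + y - (Y t ω + z)| ∂μ ≤ ∫ ω, (|Y s ω - Y t ω| + |y - z|) ∂μ := by
        refine integral_mono (hs'.sub ht').abs (hsub.add (integrable_const _)) fun ω => ?_
        simpa only [add_sub_add_comm] using abs_add_le (Y s ω - Y t ω) (y - z)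
    _ = (∫ ω, |Y s ω - Y t ω| ∂μ) + |y - z| := by
        rw [integral_add hsub (integrable_const _), integral_const, probReal_univ, one_smul]

theorem abs_shiftedMean_sub_le_dist (hH : CondH h Mh Lh ch Ch) (hY : NiceProcess μ Y)
    {s t : ℝ} (hs : 0 ≤ s) (ht : 0 ≤ t) (y z : ℝ) :
    |shiftedMean μ h Y s y - shiftedMean μ h Y t z| ≤
      (Lh + Ch) * dist (s, hY.toL1 s) (t, hY.toL1 t) + Ch * dist y z := by
  have htime : |s - t| ≤ dist (s, hY.toL1 s) (t, hY.toL1 t) := le_max_left _ _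
  have hpath : ∫ ω, |Y s ω - Y t ω| ∂μ ≤ dist (s, hY.toL1 s) (t, hY.toL1 t) :=
    (hY.dist_toL1 hs ht).symm.trans_le (le_max_right _ _)
  have := hH.Lh_pos
  have := hH.Ch_pos
  calc |shiftedMean μ h Y s y - shiftedMean μ h Y t z|
      ≤ Lh * |s - t| + Ch * ((∫ ω, |Y s ω - Y t ω| ∂μ) + |y - z|) :=
        abs_shiftedMean_sub_le hH hY hs ht y z
    _ ≤ Lh * dist (s, hY.toL1 s) (t, hY.toL1 t) +
          Ch * (dist (s, hY.toL1 s) (t, hY.toL1 t) + dist y z) := by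
        rw [← Real.dist_eq y z]
        gcongr
    _ = _ := by ring

theorem NiceProcess.cadlagOn_prodMk_toL1 (hY : NiceProcess μ Y) :
    CadlagOn fun t => (t, hY.toL1 t) :=
  (cadlagOn_of_continuous continuous_id).prodMk hY.cadlagOn_toL1

theorem cadlagOn_shiftedMean (hH : CondH h Mh Lh ch Ch) (hY : NiceProcess μ Y) {a : ℝ → ℝ}
    (ha : CadlagOn a) : CadlagOn fun t => shiftedMean μ h Y t (a t) := by
  refine (hY.cadlagOn_prodMk_toL1.prodMk ha).of_dist_le_mul (Lh + Ch + Ch) fun r s hr hs => ?_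
  refine (abs_shiftedMean_sub_le_dist hH hY hr hs (a r) (a s)).trans ?_
  have := hH.Lh_pos
  have := hH.Ch_pos
  rw [add_mul (Lh + Ch) Ch]
  gcongr
  · exact le_max_left _ _
  · exact le_max_right _ _

theorem cadlagOn_of_shiftedMean_eq (hH : CondH h Mh Lh ch Ch) (hY : NiceProcess μ Y)
    {u v : ℝ → ℝ} (hu : CadlagOn u) (hv : ∀ t, 0 ≤ t → shiftedMean μ h Y t (v t) = u t) :
    CadlagOn v := by
  refine (hY.cadlagOn_prodMk_toL1.prodMk hu).of_dist_le_mul (ch⁻¹ * (1 + (Lh + Ch)))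
    fun r s hr hs => ?_
  have hpath := abs_shiftedMean_sub_le_dist hH hY hs hr (v s) (v s)
  rw [hv s hs, dist_self, mul_zero, add_zero, dist_comm] at hpath
  have := hH.Lh_pos
  have := hH.Ch_pos
  rw [mul_assoc, ← div_eq_inv_mul, le_div_iff₀' hH.ch_pos]
  calc ch * |v r - v s| ≤ |u r - shiftedMean μ h Y r (v s)| :=
        hv r hr ▸ mul_abs_sub_le_abs_shiftedMean_sub hH hY hr (v r) (v s)
    _ ≤ |u r - u s| + |u s - shiftedMean μ h Y r (v s)| := abs_sub_le _ _ _
    _ ≤ dist (u r) (u s) + (Lh + Ch) * dist (r, hY.toL1 r) (s, hY.toL1 s) :=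
        add_le_add_right hpath _
    _ ≤ (1 + (Lh + Ch)) * dist ((r, hY.toL1 r), u r) ((s, hY.toL1 s), u s) := by
        rw [one_add_mul]
        gcongr
        · exact le_max_right _ _
        · exact le_max_left _ _

end MeanFunction

section MeanReflection

variable {Ω : Type*} [MeasurableSpace Ω] {μ : Measure Ω} {h : ℝ → ℝ → ℝ}
  {Mh Lh ch Ch : ℝ} {Y : ℝ → Ω → ℝ} {u v : ℝ → ℝ}

theorem meanSPUpper_iff_shiftedMean (hY : ∀ ω, CadlagOn fun t => Y t ω) {X : ℝ → Ω → ℝ}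
    {k : ℝ → ℝ} :
    MeanSPUpper μ h Y u X k ↔
      (∀ t, 0 ≤ t → ∀ ω, X t ω = Y t ω + k t) ∧ CadlagOn k ∧ k 0 = 0 ∧ AntitoneOn k (Ici 0) ∧
      (∀ t, 0 ≤ t → shiftedMean μ h Y t (k t) ≤ u t) ∧
      ∀ ν, IsNegStieltjes k ν → ∀ T, 0 ≤ T →
        ∫ s in Icc 0 T, (u s - shiftedMean μ h Y s (k s)) ∂ν = 0 := by
  by_cases hX : ∀ t, 0 ≤ t → ∀ ω, X t ω = Y t ω + k t
  swap
  · exact iff_of_false (fun hsol => hX hsol.2.2.2.1) fun hsol => hX hsol.1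
  have hmean {t : ℝ} (ht : 0 ≤ t) : ∫ ω, h t (X t ω) ∂μ = shiftedMean μ h Y t (k t) := by
    simp only [shiftedMean, hX t ht]
  have hslack (ν : Measure ℝ) (T : ℝ) : ∫ s in Icc 0 T, (u s - ∫ ω, h s (X s ω) ∂μ) ∂ν =
      ∫ s in Icc 0 T, (u s - shiftedMean μ h Y s (k s)) ∂ν :=
    setIntegral_congr_fun measurableSet_Icc fun s hs => congrArg (u s - ·) (hmean hs.1)
  constructor
  · rintro ⟨-, hk, hk0, -, hle, hanti, hmin⟩
    exact ⟨hX, hk, hk0, hanti, fun t ht => hmean ht ▸ hle t ht,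
      fun ν hν T hT => (hslack ν T).symm.trans (hmin ν hν.measure_Ioc hν.measure_zero T hT)⟩
  · rintro ⟨-, hk, hk0, hanti, hle, hmin⟩
    exact ⟨fun ω => ((hY ω).add hk).congr fun t ht => hX t ht ω, hk, hk0, hX,
      fun t ht => hmean ht ▸ hle t ht, hanti,
      fun ν hIoc h0 T hT => (hslack ν T).trans (hmin ν ⟨hIoc, h0⟩ T hT)⟩

variable [IsProbabilityMeasure μ]

theorem forall_setIntegral_slack_eq_zero_iff (hH : CondH h Mh Lh ch Ch) (hY : NiceProcess μ Y)
    (hu : CadlagOn u) (hv : ∀ t, 0 ≤ t → shiftedMean μ h Y t (v t) = u t) {k : ℝ → ℝ}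
    (hk : CadlagOn k) (hkv : ∀ t, 0 ≤ t → k t ≤ v t) {ν : Measure ℝ} (hν : IsNegStieltjes k ν) :
    (∀ T, 0 ≤ T → ∫ s in Icc 0 T, (u s - shiftedMean μ h Y s (k s)) ∂ν = 0) ↔
      ∀ᵐ s ∂ν, 0 ≤ s → k s = v s := by
  have hslack {s : ℝ} (hs : 0 ≤ s) : 0 ≤ u s - shiftedMean μ h Y s (k s) := by
    rw [← hv s hs, sub_nonneg]
    exact (strictMono_shiftedMean hH hY hs).monotone (hkv s hs)
  rw [(hu.sub (cadlagOn_shiftedMean hH hY hk)).forall_setIntegral_Icc_eq_zero_iff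
    (fun s hs => hslack hs) hν.measure_Icc_zero_ne_top]
  refine eventually_congr (.of_forall fun s => forall_congr' fun hs => ?_)
  rw [← hv s hs, sub_eq_zero, (strictMono_shiftedMean hH hY hs).injective.eq_iff, eq_comm]

theorem meanSPUpper_iff_isUpperReflection (hH : CondH h Mh Lh ch Ch) (hY : NiceProcess μ Y)
    (hu : CadlagOn u) (hv : ∀ t, 0 ≤ t → shiftedMean μ h Y t (v t) = u t) {X : ℝ → Ω → ℝ}
    {k : ℝ → ℝ} :
    MeanSPUpper μ h Y u X k ↔
      (∀ t, 0 ≤ t → ∀ ω, X t ω = Y t ω + k t) ∧ IsUpperReflection v k := by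
  have hle_iff {t : ℝ} (ht : 0 ≤ t) : shiftedMean μ h Y t (k t) ≤ u t ↔ k t ≤ v t := by
    rw [← hv t ht, (strictMono_shiftedMean hH hY ht).le_iff_le]
  rw [meanSPUpper_iff_shiftedMean hY.cadlag]
  refine and_congr_right fun _ => ⟨fun ⟨hk, hk0, hanti, hle, hmin⟩ => ?_, fun hk => ?_⟩
  · have hkv (t : ℝ) (ht : 0 ≤ t) : k t ≤ v t := (hle_iff ht).1 (hle t ht)
    exact ⟨hk, hk0, hanti, hkv, fun ν hν =>
      (forall_setIntegral_slack_eq_zero_iff hH hY hu hv hk hkv hν).1 (hmin ν hν)⟩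
  · exact ⟨hk.cadlag, hk.apply_zero, hk.antitoneOn,
      fun t ht => (hle_iff ht).2 (hk.le_barrier t ht), fun ν hν =>
      (forall_setIntegral_slack_eq_zero_iff hH hY hu hv hk.cadlag hk.le_barrier hν).2
        (hk.flat ν hν)⟩

end MeanReflection

/-- existence, uniqueness and explicit formula for the Skorokhod problem
with mean minimality condition and a single upper barrier. -/
theorem stmt_13 {Ω : Type*} [MeasurableSpace Ω] (μ : Measure Ω) [IsProbabilityMeasure μ]
    (h : ℝ → ℝ → ℝ) (Mh Lh ch Ch : ℝ) (hH : CondH h Mh Lh ch Ch)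
    (Y : ℝ → Ω → ℝ) (hY : NiceProcess μ Y)
    (u : ℝ → ℝ) (hu : CadlagOn u) (h0 : (∫ ω, h 0 (Y 0 ω) ∂μ) ≤ u 0)
    (ubar : ℝ → ℝ)
    (hubar : ∀ s : ℝ, 0 ≤ s → (∫ ω, h s (Y s ω - (∫ ω', Y s ω' ∂μ) + ubar s) ∂μ) = u s) :
    (∃ (X : ℝ → Ω → ℝ) (k : ℝ → ℝ), MeanSPUpper μ h Y u X k) ∧
    (∀ (X X' : ℝ → Ω → ℝ) (k k' : ℝ → ℝ),
      MeanSPUpper μ h Y u X k → MeanSPUpper μ h Y u X' k' →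
      ∀ t : ℝ, 0 ≤ t → k t = k' t ∧ ∀ ω, X t ω = X' t ω) ∧
    (∀ (X : ℝ → Ω → ℝ) (k : ℝ → ℝ), MeanSPUpper μ h Y u X k →
      ∀ t : ℝ, 0 ≤ t →
        k t = -sSup ((fun s => max (-(ubar s - ∫ ω, Y s ω ∂μ)) 0) '' Set.Icc 0 t)) := by
  set v : ℝ → ℝ := fun t => ubar t - ∫ ω, Y t ω ∂μ
  set k₀ : ℝ → ℝ := fun t => -posRunningSup (fun s => -v s) t
  have hv (t : ℝ) (ht : 0 ≤ t) : shiftedMean μ h Y t (v t) = u t := by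
    rw [← hubar t ht, shiftedMean]
    exact integral_congr_ae (.of_forall fun ω => congrArg (h t) (by simp only [v]; ring))
  have hv0 : 0 ≤ v 0 := by
    rw [← (strictMono_shiftedMean hH hY le_rfl).le_iff_le, hv 0 le_rfl]
    simpa only [shiftedMean, add_zero] using h0
  have hiff {X : ℝ → Ω → ℝ} {k : ℝ → ℝ} : MeanSPUpper μ h Y u X k ↔
      (∀ t, 0 ≤ t → ∀ ω, X t ω = Y t ω + k t) ∧ IsUpperReflection v k :=
    meanSPUpper_iff_isUpperReflection hH hY hu hv
  have hk₀ : IsUpperReflection v k₀ :=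
    isUpperReflection_neg_posRunningSup (cadlagOn_of_shiftedMean_eq hH hY hu hv) hv0
  have hformula (X : ℝ → Ω → ℝ) (k : ℝ → ℝ) (hXk : MeanSPUpper μ h Y u X k) (t : ℝ)
      (ht : 0 ≤ t) : k t = k₀ t := (hiff.1 hXk).2.eq_neg_posRunningSup ht
  refine ⟨⟨fun t ω => Y t ω + k₀ t, k₀, hiff.2 ⟨fun _ _ _ => rfl, hk₀⟩⟩,
    fun X X' k k' hXk hXk' t ht => ?_, hformula⟩
  have hkk' : k t = k' t := (hformula X k hXk t ht).trans (hformula X' k' hXk' t ht).symm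
  exact ⟨hkk', fun ω => by rw [(hiff.1 hXk).1 t ht, (hiff.1 hXk').1 t ht, hkk']⟩
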